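/- Let M₁ and M₂ be finite MDPs with the same discount factor γ ∈ [0,1), and let π₁ and π₂ be stochastic policies on M₁ and M₂ respectively (πᵢ maps each state of Sᵢ to a probability vector over Aᵢ). Define Rᵢ^{πᵢ}(s) = Σ_a πᵢ(a|s)·Rᵢ(s,a) and Pᵢ^{πᵢ}(s̃|s) = Σ_a πᵢ(a|s)·Pᵢ(s̃|s,a). Let the on-policy GBSM d_π^{1-2} be the pointwise supremum of the iterates from 0 of the map d ↦ |R₁^{π₁}(s) − R₂^{π₂}(s')| + γ·W₁(P₁^{π₁}(·|s), P₂^{π₂}(·|s'); d). If V₁^{π₁} and V₂^{π₂} satisfy the on-policy Bellman equations Vᵢ^{πᵢ}(s) = Rᵢ^{πᵢ}(s) + γ·Σ_{s̃} Pᵢ^{πᵢ}(s̃|s)·Vᵢ^{πᵢ}(s̃), then |V₁^{π₁}(s) − V₂^{π₂}(s')| ≤ d_π^{1-2}(s,s') for all (s,s') ∈ S₁ × S₂. -/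

import Mathlib

open scoped BigOperators

noncomputable section

/-- The (finite, linear-programming) 1-Wasserstein distance between probability
vectors `P` on `S₁` and `Q` on `S₂` with cost function `d`. -/
def W1 {S₁ S₂ : Type*} [Fintype S₁] [Fintype S₂]
    (P : S₁ → ℝ) (Q : S₂ → ℝ) (d : S₁ → S₂ → ℝ) : ℝ :=
  sInf { c : ℝ | ∃ lam : S₁ → S₂ → ℝ,
    (∀ i j, 0 ≤ lam i j) ∧ (∀ i, ∑ j, lam i j = P i) ∧
    (∀ j, ∑ i, lam i j = Q j) ∧ c = ∑ i, ∑ j, lam i j * d i j }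

/-- A finite Markov decision process (without its discount factor). -/
structure FinMDP (S A : Type*) [Fintype S] [Fintype A] where
  P : S → A → S → ℝ
  R : S → A → ℝ
  P_nonneg : ∀ s a s', 0 ≤ P s a s'
  P_sum : ∀ s a, ∑ s', P s a s' = 1

variable {S₁ A₁ S₂ A₂ : Type*} [Fintype S₁] [Fintype A₁] [Fintype S₂] [Fintype A₂]

/-- `δ(d)((s,a),(s',a')) = |R₁(s,a) − R₂(s',a')| + γ·W₁(P₁(·|s,a), P₂(·|s',a'); d)` -/
def gbsmDelta (M₁ : FinMDP S₁ A₁) (M₂ : FinMDP S₂ A₂) (γ : ℝ)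
    (d : S₁ → S₂ → ℝ) (s : S₁) (a : A₁) (s' : S₂) (a' : A₂) : ℝ :=
  |M₁.R s a - M₂.R s' a'| + γ * W1 (M₁.P s a) (M₂.P s' a') d

/-- The GBSM operator `F(d)(s,s') = H(X_s, X_{s'}; δ(d))` where `H` is the Hausdorff
metric between the finite sets `X_s = {(s,a)}`, `X_{s'} = {(s',a')}`. -/
def gbsmF (M₁ : FinMDP S₁ A₁) (M₂ : FinMDP S₂ A₂) (γ : ℝ)
    (d : S₁ → S₂ → ℝ) : S₁ → S₂ → ℝ :=
  fun s s' =>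
    max (⨆ a : A₁, ⨅ a' : A₂, gbsmDelta M₁ M₂ γ d s a s' a')
        (⨅ a : A₁, ⨆ a' : A₂, gbsmDelta M₁ M₂ γ d s a s' a')

/-- The GBSM: pointwise supremum of the iterates of `gbsmF` from the zero function. -/
def gbsm (M₁ : FinMDP S₁ A₁) (M₂ : FinMDP S₂ A₂) (γ : ℝ) : S₁ → S₂ → ℝ :=
  fun s s' => ⨆ n : ℕ, (gbsmF M₁ M₂ γ)^[n] (fun _ _ => 0) s s'


/-- One step of the on-policy GBSM operator for stochastic policies `π₁`, `π₂`. -/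
def onPolicyOp (M₁ : FinMDP S₁ A₁) (M₂ : FinMDP S₂ A₂) (γ : ℝ)
    (π₁ : S₁ → A₁ → ℝ) (π₂ : S₂ → A₂ → ℝ) (d : S₁ → S₂ → ℝ) : S₁ → S₂ → ℝ :=
  fun s s' =>
    |(∑ a, π₁ s a * M₁.R s a) - ∑ a', π₂ s' a' * M₂.R s' a'| +
      γ * W1 (fun t => ∑ a, π₁ s a * M₁.P s a t)
             (fun t => ∑ a', π₂ s' a' * M₂.P s' a' t) d

/-- The on-policy GBSM: pointwise supremum of the iterates of `onPolicyOp` from 0. -/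
def onPolicyGbsm (M₁ : FinMDP S₁ A₁) (M₂ : FinMDP S₂ A₂) (γ : ℝ)
    (π₁ : S₁ → A₁ → ℝ) (π₂ : S₂ → A₂ → ℝ) : S₁ → S₂ → ℝ :=
  fun s s' => ⨆ n : ℕ, (onPolicyOp M₁ M₂ γ π₁ π₂)^[n] (fun _ _ => 0) s s'

/-!
For fixed `P`, `Q` the map `W1 P Q` is monotone in the cost, and adding a constant `c` to the cost
adds `c` to its value; hence the on-policy operator `T` satisfies Blackwell's conditions: it is
monotone and `T (d + c) = T d + γ * c`. The Bellman equations and the easy half of Kantorovich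
duality give `D ≤ T D` for `D s s' = |V₁ s - V₂ s'|`. If `C` is an upper bound of `D`, then
`D ≤ T^[n] D ≤ T^[n] C = T^[n] 0 + γ ^ n * C`, and `n → ∞` yields `D ≤ ⨆ n, T^[n] 0`. The iterates
are bounded, so this supremum is not a junk value: if `0 ≤ K` and `T 0 ≤ K`, then `T` maps
`K / (1 - γ)` below itself.
-/

section Transport

variable {P : S₁ → ℝ} {Q : S₂ → ℝ}

/-- The couplings of `P` and `Q`, i.e. the transport plans over which `W1 P Q` minimizes. -/
def couplings (P : S₁ → ℝ) (Q : S₂ → ℝ) : Set (S₁ → S₂ → ℝ) :=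
  {lam | (∀ i j, 0 ≤ lam i j) ∧ (∀ i, ∑ j, lam i j = P i) ∧ ∀ j, ∑ i, lam i j = Q j}

/-- The total cost of the transport plan `lam` for the unit costs `d`. -/
def transportCost (lam d : S₁ → S₂ → ℝ) : ℝ :=
  ∑ i, ∑ j, lam i j * d i j

theorem couplings_nonempty (hP : P ∈ stdSimplex ℝ S₁) (hQ : Q ∈ stdSimplex ℝ S₂) :
    (couplings P Q).Nonempty := by
  refine ⟨fun i j => P i * Q j, fun i j => mul_nonneg (hP.1 i) (hQ.1 j), fun i => ?_, fun j => ?_⟩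
  · rw [← Finset.mul_sum, hQ.2, mul_one]
  · rw [← Finset.sum_mul, hP.2, one_mul]

theorem transportCost_mono {lam d d' : S₁ → S₂ → ℝ} (hlam : ∀ i j, 0 ≤ lam i j) (hd : d ≤ d') :
    transportCost lam d ≤ transportCost lam d' :=
  Finset.sum_le_sum fun i _ => Finset.sum_le_sum fun j _ =>
    mul_le_mul_of_nonneg_left (hd i j) (hlam i j)

theorem transportCost_add (lam d d' : S₁ → S₂ → ℝ) :
    transportCost lam (d + d') = transportCost lam d + transportCost lam d' := by
  simp only [transportCost, Pi.add_apply, mul_add, Finset.sum_add_distrib]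

theorem transportCost_smul_one {lam : S₁ → S₂ → ℝ} (hlam : lam ∈ couplings P Q) (c : ℝ) :
    transportCost lam (c • 1) = (∑ i, P i) * c := by
  simp only [transportCost, Pi.smul_apply, Pi.one_apply, smul_eq_mul, mul_one, ← Finset.sum_mul,
    hlam.2.1]

theorem abs_transportCost_le {lam : S₁ → S₂ → ℝ} (hlam : ∀ i j, 0 ≤ lam i j) (d : S₁ → S₂ → ℝ) :
    |transportCost lam d| ≤ transportCost lam |d| := by
  refine (Finset.abs_sum_le_sum_abs _ _).trans <| Finset.sum_le_sum fun i _ =>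
    (Finset.abs_sum_le_sum_abs _ _).trans_eq <| Finset.sum_congr rfl fun j _ => ?_
  rw [abs_mul, abs_of_nonneg (hlam i j), Pi.abs_apply, Pi.abs_apply]

theorem transportCost_sub_eq {lam : S₁ → S₂ → ℝ} (hlam : lam ∈ couplings P Q)
    (V₁ : S₁ → ℝ) (V₂ : S₂ → ℝ) :
    transportCost lam (fun i j => V₁ i - V₂ j) = ∑ i, P i * V₁ i - ∑ j, Q j * V₂ j := by
  simp only [transportCost, mul_sub, Finset.sum_sub_distrib, ← hlam.2.1, ← hlam.2.2,
    Finset.sum_mul]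
  rw [Finset.sum_comm (f := fun i j => lam i j * V₂ j)]

theorem bddBelow_range_transportCost (P : S₁ → ℝ) (Q : S₂ → ℝ) (d : S₁ → S₂ → ℝ) :
    BddBelow (Set.range fun lam : couplings P Q => transportCost lam.1 d) := by
  obtain ⟨m, hm⟩ := Finite.bddBelow_range (Function.uncurry d)
  have hmd : m • 1 ≤ d := fun i j => by simpa using hm ⟨(i, j), rfl⟩
  refine ⟨(∑ i, P i) * m, ?_⟩
  rintro _ ⟨⟨lam, hlam⟩, rfl⟩
  exact (transportCost_smul_one hlam m).symm.trans_le (transportCost_mono hlam.1 hmd)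

theorem W1_eq_iInf (P : S₁ → ℝ) (Q : S₂ → ℝ) (d : S₁ → S₂ → ℝ) :
    W1 P Q d = ⨅ lam : couplings P Q, transportCost lam.1 d := by
  refine congrArg sInf (Set.ext fun c => ⟨?_, ?_⟩)
  · rintro ⟨lam, h_nonneg, h_fst, h_snd, rfl⟩
    exact ⟨⟨lam, h_nonneg, h_fst, h_snd⟩, rfl⟩
  · rintro ⟨⟨lam, h_nonneg, h_fst, h_snd⟩, rfl⟩
    exact ⟨lam, h_nonneg, h_fst, h_snd, rfl⟩

theorem W1_mono (P : S₁ → ℝ) (Q : S₂ → ℝ) : Monotone (W1 P Q) := fun d d' hd => by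
  rw [W1_eq_iInf, W1_eq_iInf]
  exact ciInf_mono (bddBelow_range_transportCost P Q d) fun lam =>
    transportCost_mono lam.2.1 hd

theorem W1_add_smul_one (hP : P ∈ stdSimplex ℝ S₁) (hQ : Q ∈ stdSimplex ℝ S₂)
    (d : S₁ → S₂ → ℝ) (c : ℝ) : W1 P Q (d + c • 1) = W1 P Q d + c := by
  have := (couplings_nonempty hP hQ).to_subtype
  rw [W1_eq_iInf, W1_eq_iInf, ciInf_add (bddBelow_range_transportCost P Q d)]
  refine iInf_congr fun lam => ?_
  rw [transportCost_add, transportCost_smul_one lam.2, hP.2, one_mul]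

theorem abs_expectation_sub_le_W1 (hP : P ∈ stdSimplex ℝ S₁) (hQ : Q ∈ stdSimplex ℝ S₂)
    (V₁ : S₁ → ℝ) (V₂ : S₂ → ℝ) :
    |∑ i, P i * V₁ i - ∑ j, Q j * V₂ j| ≤ W1 P Q fun i j => |V₁ i - V₂ j| := by
  have := (couplings_nonempty hP hQ).to_subtype
  rw [W1_eq_iInf]
  refine le_ciInf fun lam => ?_
  rw [← transportCost_sub_eq lam.2]
  exact abs_transportCost_le lam.2.1 _

end Transport

theorem exists_nonneg_le_smul_one {α β : Type*} [Finite α] [Finite β] (d : α → β → ℝ) :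
    ∃ K : ℝ, 0 ≤ K ∧ d ≤ K • 1 := by
  obtain ⟨K, hK⟩ := Finite.bddAbove_range (Function.uncurry d)
  refine ⟨max K 0, le_max_right K 0, fun a b => ?_⟩
  simpa using Or.inl (hK ⟨(a, b), rfl⟩)

/-- Blackwell's sufficient conditions for `f` to be a contraction with modulus `γ`, relative to a
vector `u` playing the role of the constant function `1`. -/
structure IsBlackwell {E : Type*} [AddCommGroup E] [PartialOrder E] [Module ℝ E]
    (u : E) (γ : ℝ) (f : E → E) : Prop where
  monotone : Monotone f
  map_add_smul : ∀ (d : E) (c : ℝ), f (d + c • u) = f d + (γ * c) • u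

namespace IsBlackwell

section OrderedModule

variable {E : Type*} [AddCommGroup E] [PartialOrder E] [Module ℝ E]
  {u : E} {γ : ℝ} {f : E → E}

theorem iterate_add_smul (hf : IsBlackwell u γ f) (d : E) (c : ℝ) (n : ℕ) :
    f^[n] (d + c • u) = f^[n] d + (γ ^ n * c) • u := by
  induction n with
  | zero => simp
  | succ n ih =>
    rw [Function.iterate_succ_apply', Function.iterate_succ_apply', ih, hf.map_add_smul, pow_succ',
      mul_assoc]

theorem le_iterate_add_smul (hf : IsBlackwell u γ f) {D d : E} {c : ℝ} (hD : D ≤ f D)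
    (hDd : D ≤ d + c • u) (n : ℕ) : D ≤ f^[n] d + (γ ^ n * c) • u :=
  calc
    D ≤ f^[n] D := hf.monotone.monotone_iterate_of_le_map hD n.zero_le
    _ ≤ f^[n] (d + c • u) := hf.monotone.iterate n hDd
    _ = f^[n] d + (γ ^ n * c) • u := hf.iterate_add_smul d c n

theorem map_smul_le_self [IsOrderedAddMonoid E] (hf : IsBlackwell u γ f) (hγ : γ ≠ 1) {K : ℝ}
    (hK : f 0 ≤ K • u) : f ((K / (1 - γ)) • u) ≤ (K / (1 - γ)) • u := by
  have hγ' : 1 - γ ≠ 0 := sub_ne_zero.mpr hγ.symm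
  calc
    f ((K / (1 - γ)) • u) = f 0 + (γ * (K / (1 - γ))) • u := by rw [← hf.map_add_smul, zero_add]
    _ ≤ K • u + (γ * (K / (1 - γ))) • u := by gcongr
    _ = (K / (1 - γ)) • u := by
      rw [← add_smul]
      congr 1
      field_simp
      ring

theorem iterate_zero_le_smul [IsOrderedAddMonoid E] [PosSMulMono ℝ E] (hf : IsBlackwell u γ f)
    (hu : 0 ≤ u) (hγ : γ < 1) {K : ℝ} (hK0 : 0 ≤ K) (hK : f 0 ≤ K • u) (n : ℕ) :
    f^[n] 0 ≤ (K / (1 - γ)) • u :=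
  calc
    f^[n] 0 ≤ f^[n] ((K / (1 - γ)) • u) :=
      hf.monotone.iterate n (smul_nonneg (div_nonneg hK0 (sub_nonneg.mpr hγ.le)) hu)
    _ ≤ (K / (1 - γ)) • u :=
      hf.monotone.antitone_iterate_of_map_le (hf.map_smul_le_self hγ.ne hK) n.zero_le

end OrderedModule

section Function

variable {α β : Type*} [Finite α] [Finite β] {γ : ℝ} {f : (α → β → ℝ) → α → β → ℝ}

theorem bddAbove_range_iterate_zero (hf : IsBlackwell 1 γ f) (hγ : γ < 1) (a : α) (b : β) :
    BddAbove (Set.range fun n : ℕ => f^[n] 0 a b) := by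
  obtain ⟨K, hK0, hK⟩ := exists_nonneg_le_smul_one (f 0)
  refine ⟨K / (1 - γ), ?_⟩
  rintro _ ⟨n, rfl⟩
  simpa using hf.iterate_zero_le_smul zero_le_one hγ hK0 hK n a b

theorem le_iSup_iterate_zero (hf : IsBlackwell 1 γ f) (hγ0 : 0 ≤ γ) (hγ1 : γ < 1)
    {D : α → β → ℝ} (hD : D ≤ f D) (a : α) (b : β) : D a b ≤ ⨆ n : ℕ, f^[n] 0 a b := by
  obtain ⟨C, -, hC⟩ := exists_nonneg_le_smul_one D
  have h_le (n : ℕ) : D a b ≤ (⨆ n : ℕ, f^[n] 0 a b) + γ ^ n * C :=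
    calc
      D a b ≤ f^[n] 0 a b + γ ^ n * C := by
        simpa using hf.le_iterate_add_smul hD (hC.trans_eq (zero_add _).symm) n a b
      _ ≤ (⨆ n : ℕ, f^[n] 0 a b) + γ ^ n * C := by
        gcongr
        exact le_ciSup (hf.bddAbove_range_iterate_zero hγ1 a b) n
  have h_tendsto : Filter.Tendsto (fun n : ℕ => (⨆ n : ℕ, f^[n] 0 a b) + γ ^ n * C) Filter.atTop
      (nhds (⨆ n : ℕ, f^[n] 0 a b)) := by
    simpa using ((tendsto_pow_atTop_nhds_zero_of_lt_one hγ0 hγ1).mul_const C).const_add _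
  exact ge_of_tendsto' h_tendsto h_le

end Function

end IsBlackwell

namespace FinMDP

variable {S A : Type*} [Fintype S] [Fintype A]

/-- The reward `R^π` of the Markov reward process induced by the policy `π`. -/
def policyReward (M : FinMDP S A) (π : S → A → ℝ) (s : S) : ℝ :=
  ∑ a, π s a * M.R s a

/-- The transition probabilities `P^π(t | s)` of the Markov reward process induced by the policy
`π`. -/
def policyKernel (M : FinMDP S A) (π : S → A → ℝ) (s t : S) : ℝ :=
  ∑ a, π s a * M.P s a t

theorem policyKernel_mem_stdSimplex (M : FinMDP S A) {π : S → A → ℝ} {s : S}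
    (hπ : π s ∈ stdSimplex ℝ A) : M.policyKernel π s ∈ stdSimplex ℝ S := by
  refine ⟨fun t => Finset.sum_nonneg fun a _ => mul_nonneg (hπ.1 a) (M.P_nonneg s a t), ?_⟩
  simp only [policyKernel]
  rw [Finset.sum_comm]
  simp only [← Finset.mul_sum, M.P_sum, mul_one, hπ.2]

end FinMDP

section OnPolicy

variable {M₁ : FinMDP S₁ A₁} {M₂ : FinMDP S₂ A₂} {γ : ℝ} {π₁ : S₁ → A₁ → ℝ} {π₂ : S₂ → A₂ → ℝ}

theorem onPolicyOp_apply (d : S₁ → S₂ → ℝ) (s : S₁) (s' : S₂) :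
    onPolicyOp M₁ M₂ γ π₁ π₂ d s s' = |M₁.policyReward π₁ s - M₂.policyReward π₂ s'| +
      γ * W1 (M₁.policyKernel π₁ s) (M₂.policyKernel π₂ s') d :=
  rfl

theorem isBlackwell_onPolicyOp (hγ : 0 ≤ γ) (hπ₁ : ∀ s, π₁ s ∈ stdSimplex ℝ A₁)
    (hπ₂ : ∀ s', π₂ s' ∈ stdSimplex ℝ A₂) : IsBlackwell 1 γ (onPolicyOp M₁ M₂ γ π₁ π₂) where
  monotone d d' hd s s' := by
    rw [onPolicyOp_apply, onPolicyOp_apply]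
    gcongr
    exact W1_mono _ _ hd
  map_add_smul d c := by
    ext s s'
    simp only [onPolicyOp_apply, Pi.add_apply, Pi.smul_apply, Pi.one_apply, smul_eq_mul, mul_one]
    rw [W1_add_smul_one (M₁.policyKernel_mem_stdSimplex (hπ₁ s))
      (M₂.policyKernel_mem_stdSimplex (hπ₂ s')), mul_add, add_assoc]

theorem abs_value_sub_le_onPolicyOp (hγ : 0 ≤ γ) (hπ₁ : ∀ s, π₁ s ∈ stdSimplex ℝ A₁)
    (hπ₂ : ∀ s', π₂ s' ∈ stdSimplex ℝ A₂) {V₁ : S₁ → ℝ} {V₂ : S₂ → ℝ}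
    (hV₁ : ∀ s, V₁ s = M₁.policyReward π₁ s + γ * ∑ t, M₁.policyKernel π₁ s t * V₁ t)
    (hV₂ : ∀ s', V₂ s' = M₂.policyReward π₂ s' + γ * ∑ t, M₂.policyKernel π₂ s' t * V₂ t)
    (s : S₁) (s' : S₂) :
    |V₁ s - V₂ s'| ≤ onPolicyOp M₁ M₂ γ π₁ π₂ (fun t t' => |V₁ t - V₂ t'|) s s' :=
  calc
    |V₁ s - V₂ s'| = |(M₁.policyReward π₁ s - M₂.policyReward π₂ s') +
        γ * (∑ t, M₁.policyKernel π₁ s t * V₁ t - ∑ t, M₂.policyKernel π₂ s' t * V₂ t)| := by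
      rw [hV₁ s, hV₂ s', add_sub_add_comm, mul_sub]
    _ ≤ |M₁.policyReward π₁ s - M₂.policyReward π₂ s'| +
        γ * |∑ t, M₁.policyKernel π₁ s t * V₁ t - ∑ t, M₂.policyKernel π₂ s' t * V₂ t| :=
      (abs_add_le _ _).trans_eq (by rw [abs_mul, abs_of_nonneg hγ])
    _ ≤ onPolicyOp M₁ M₂ γ π₁ π₂ (fun t t' => |V₁ t - V₂ t'|) s s' := by
      rw [onPolicyOp_apply]
      gcongr
      exact abs_expectation_sub_le_W1 (M₁.policyKernel_mem_stdSimplex (hπ₁ s))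
        (M₂.policyKernel_mem_stdSimplex (hπ₂ s')) V₁ V₂

theorem onPolicyGbsm_value_bound_general (hγ0 : 0 ≤ γ) (hγ1 : γ < 1)
    (hπ₁ : ∀ s, π₁ s ∈ stdSimplex ℝ A₁) (hπ₂ : ∀ s', π₂ s' ∈ stdSimplex ℝ A₂)
    {V₁ : S₁ → ℝ} {V₂ : S₂ → ℝ}
    (hV₁ : ∀ s, V₁ s = M₁.policyReward π₁ s + γ * ∑ t, M₁.policyKernel π₁ s t * V₁ t)
    (hV₂ : ∀ s', V₂ s' = M₂.policyReward π₂ s' + γ * ∑ t, M₂.policyKernel π₂ s' t * V₂ t)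
    (s : S₁) (s' : S₂) :
    |V₁ s - V₂ s'| ≤ onPolicyGbsm M₁ M₂ γ π₁ π₂ s s' :=
  (isBlackwell_onPolicyOp hγ0 hπ₁ hπ₂).le_iSup_iterate_zero hγ0 hγ1
    (abs_value_sub_le_onPolicyOp hγ0 hπ₁ hπ₂ hV₁ hV₂) s s'

end OnPolicy

/-- the on-policy GBSM bounds the difference of on-policy value
functions. -/
theorem onPolicyGbsm_value_bound
    [Nonempty S₁] [Nonempty A₁] [Nonempty S₂] [Nonempty A₂]
    (M₁ : FinMDP S₁ A₁) (M₂ : FinMDP S₂ A₂) (γ Rbar : ℝ)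
    (hγ0 : 0 ≤ γ) (hγ1 : γ < 1) (hRbar : 0 < Rbar)
    (hR₁ : ∀ s a, 0 ≤ M₁.R s a ∧ M₁.R s a ≤ Rbar)
    (hR₂ : ∀ s a, 0 ≤ M₂.R s a ∧ M₂.R s a ≤ Rbar)
    (π₁ : S₁ → A₁ → ℝ) (π₂ : S₂ → A₂ → ℝ)
    (hπ₁0 : ∀ s a, 0 ≤ π₁ s a) (hπ₁1 : ∀ s, ∑ a, π₁ s a = 1)
    (hπ₂0 : ∀ s' a', 0 ≤ π₂ s' a') (hπ₂1 : ∀ s', ∑ a', π₂ s' a' = 1)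
    (V₁ : S₁ → ℝ) (V₂ : S₂ → ℝ)
    (hV₁ : ∀ s, V₁ s =
      (∑ a, π₁ s a * M₁.R s a) +
        γ * ∑ t, (∑ a, π₁ s a * M₁.P s a t) * V₁ t)
    (hV₂ : ∀ s', V₂ s' =
      (∑ a', π₂ s' a' * M₂.R s' a') +
        γ * ∑ t, (∑ a', π₂ s' a' * M₂.P s' a' t) * V₂ t) :
    ∀ (s : S₁) (s' : S₂), |V₁ s - V₂ s'| ≤ onPolicyGbsm M₁ M₂ γ π₁ π₂ s s' :=
  onPolicyGbsm_value_bound_general hγ0 hγ1 (fun s => ⟨hπ₁0 s, hπ₁1 s⟩)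
    (fun s' => ⟨hπ₂0 s', hπ₂1 s'⟩) hV₁ hV₂

end
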